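/- arXiv:2412.04961 — 4 statements merged into one kernel-verified Lean document; each statement's English description precedes it below -/
import Mathlib

section
/- Let (E^•, I_•, ∫) be a Cheeger–Simons model over 𝕂 and let S = (F^•, E^•, I^•) be its associated general spark complex. For every k ≥ 0, the map GS : Diff^k(CS) → Ĥ^k(S) defined by f ↦ [(T, ω̃, c)] — where T ∈ F^k is any lift with (q∘T)|_{Z_k(I_•)} = f and δT = ω̃ − c with ω ∈ E^{k+1}, c ∈ I^{k+1} — is a well-defined group isomorphism. -/
/-!
A spark `(T, ω, c)` restricts to the differential character `q ∘ T|_Z` on cycles, and `GS` is the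
inverse of the isomorphism this induces on spark classes. Two facts make this work. Since
subgroups of free abelian groups are projective, `Z_k(I_•)` is a direct summand of `I_k`, so
characters lift to `F^k` and integral homomorphisms on cycles extend to `I_k`. And a form whose
periods over all chains are integral vanishes, i.e. `E^• ∩ I^• = 0` in `F^•`, so a spark is
determined up to equivalence by the values of `T` on cycles modulo `ℤ`.
-/

open AddSubgroup

noncomputable section

/-- Cycles of an `ℕ`-indexed chain complex, with the convention `Z_0 = I_0`
(i.e. `∂ : I_0 → I_{-1} = 0`). -/
def Zc {I : ℕ → Type*} [∀ i, AddCommGroup (I i)] (bd : ∀ k, I (k+1) →+ I k) :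
    ∀ k, AddSubgroup (I k)
  | 0 => ⊤
  | n+1 => (bd n).ker

theorem mem_Zc_bd {I : ℕ → Type*} [∀ i, AddCommGroup (I i)] (bd : ∀ k, I (k+1) →+ I k)
    (hbd : ∀ k x, bd k (bd (k+1) x) = 0) :
    ∀ (k : ℕ) (β : I (k+1)), bd k β ∈ Zc bd k
  | 0, _ => mem_top _
  | n+1, β => by simpa [Zc, AddMonoidHom.mem_ker] using hbd n β

/-- Coboundaries of an `ℕ`-indexed cochain complex, with the convention
`B^0 = 0`. -/
def Bc {E : ℕ → Type*} [∀ i, AddCommGroup (E i)] (d : ∀ k, E k →+ E (k+1)) :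
    ∀ k, AddSubgroup (E k)
  | 0 => ⊥
  | n+1 => (d n).range

/-- Cohomology of an `ℕ`-indexed cochain complex. -/
abbrev Hc {E : ℕ → Type*} [∀ i, AddCommGroup (E i)] (d : ∀ k, E k →+ E (k+1)) (k : ℕ) :=
  ↥(d k).ker ⧸ ((Bc d k).addSubgroupOf (d k).ker)

/-- The class of a cocycle in cohomology. -/
def Hmk {E : ℕ → Type*} [∀ i, AddCommGroup (E i)] (d : ∀ k, E k →+ E (k+1)) (k : ℕ) :
    ↥(d k).ker →+ Hc d k := QuotientAddGroup.mk' _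

/-- The codifferential on `Hom(I_•, A)` induced by the boundary map of `I_•`. -/
def codiff {I : ℕ → Type*} [∀ i, AddCommGroup (I i)] (bd : ∀ k, I (k+1) →+ I k)
    (A : Type*) [AddCommGroup A] (k : ℕ) : (I k →+ A) →+ (I (k+1) →+ A) :=
  AddMonoidHom.mk' (fun h => h.comp (bd k)) (fun h g => by ext x; simp)

/-- `ℤ` regarded as an additive subgroup of `𝕂`. -/
def intSub (𝕂 : Type*) [Field 𝕂] : AddSubgroup 𝕂 := zmultiples (1 : 𝕂)

/-- The group `𝕂/ℤ`. -/
abbrev KmodZ (𝕂 : Type*) [Field 𝕂] := 𝕂 ⧸ intSub 𝕂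

/-- The quotient map `q : 𝕂 → 𝕂/ℤ`. -/
def qZ (𝕂 : Type*) [Field 𝕂] : 𝕂 →+ KmodZ 𝕂 := QuotientAddGroup.mk' _

/-- The inclusion `Φ : Hom(I_k, ℤ) → Hom(I_k, 𝕂)`. -/
def PhiMap {I : ℕ → Type*} [∀ i, AddCommGroup (I i)] (𝕂 : Type*) [Field 𝕂] (k : ℕ) :
    (I k →+ ℤ) →+ (I k →+ 𝕂) :=
  AddMonoidHom.mk' (fun h => (Int.castAddHom 𝕂).comp h) (fun a b => by ext x; simp)

/-- The differential character group `Diff^k` of a Cheeger–Simons model. -/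
def DiffChar {𝕂 : Type*} [Field 𝕂] {I E : ℕ → Type*}
    [∀ i, AddCommGroup (I i)] [∀ i, AddCommGroup (E i)]
    (bd : ∀ k, I (k+1) →+ I k) (hbd : ∀ k x, bd k (bd (k+1) x) = 0)
    (pair : ∀ k, E k →+ (I k →+ 𝕂)) (k : ℕ) :
    AddSubgroup ((Zc bd k) →+ KmodZ 𝕂) where
  carrier := {f | ∃ ω : E (k+1), ∀ β : I (k+1),
      f ⟨bd k β, mem_Zc_bd bd hbd k β⟩ = qZ 𝕂 (pair (k+1) ω β)}
  add_mem' := by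
    rintro f g ⟨ω, hω⟩ ⟨ω', hω'⟩
    exact ⟨ω + ω', fun β => by
      simp [AddMonoidHom.add_apply, hω β, hω' β]⟩
  zero_mem' := ⟨0, fun β => by simp [qZ]⟩
  neg_mem' := by
    rintro f ⟨ω, hω⟩
    exact ⟨-ω, fun β => by simp [AddMonoidHom.neg_apply, hω β]⟩

/-- The subgroup `E^k_0` of closed elements of `E^k` with integral periods. -/
def Ezero {𝕂 : Type*} [Field 𝕂] {I E : ℕ → Type*}
    [∀ i, AddCommGroup (I i)] [∀ i, AddCommGroup (E i)]
    (bd : ∀ k, I (k+1) →+ I k) (d : ∀ k, E k →+ E (k+1))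
    (pair : ∀ k, E k →+ (I k →+ 𝕂)) (k : ℕ) : AddSubgroup (E k) where
  carrier := {ω | d k ω = 0 ∧ ∀ α ∈ Zc bd k, pair k ω α ∈ intSub 𝕂}
  add_mem' := by
    rintro ω ω' ⟨h1, h2⟩ ⟨h1', h2'⟩
    refine ⟨by simp [h1, h1'], fun α hα => ?_⟩
    simpa [AddMonoidHom.add_apply] using add_mem (h2 α hα) (h2' α hα)
  zero_mem' := ⟨by simp, fun α _ => by simp [zero_mem]⟩
  neg_mem' := by
    rintro ω ⟨h1, h2⟩
    exact ⟨by simp [h1], fun α hα => by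
      simpa [AddMonoidHom.neg_apply] using neg_mem (h2 α hα)⟩


section Spark

variable {F E Ic : ℕ → Type*}
  [∀ i, AddCommGroup (F i)] [∀ i, AddCommGroup (E i)] [∀ i, AddCommGroup (Ic i)]

/-- The group of general sparks of degree `k` of a general spark complex
`(F^•, E^•, I^•)`: triples `(a, e, r)` with `da = e - Ψ(r)` (inside `F^{k+1}`,
via the embedding `j : E^• ↪ F^•`) and `dr = 0`. -/
def Sparks (dF : ∀ k, F k →+ F (k+1)) (dI : ∀ k, Ic k →+ Ic (k+1))
    (Ψ : ∀ k, Ic k →+ F k) (j : ∀ k, E k →+ F k) (k : ℕ) :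
    AddSubgroup (F k × E (k+1) × Ic (k+1)) where
  carrier := {p | dF k p.1 = j (k+1) p.2.1 - Ψ (k+1) p.2.2 ∧ dI (k+1) p.2.2 = 0}
  add_mem' := by
    rintro p q ⟨h1, h2⟩ ⟨h1', h2'⟩
    refine ⟨?_, ?_⟩ <;> simp [Prod.fst_add, Prod.snd_add, h1, h1', h2, h2'] <;> abel
  zero_mem' := by simp
  neg_mem' := by
    rintro p ⟨h1, h2⟩
    refine ⟨?_, ?_⟩ <;> simp [Prod.fst_neg, Prod.snd_neg, h1, h2] <;> abel

/-- The subgroup of sparks equivalent to `0`: a spark `(a, e, r)` is trivial when there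
are `b ∈ F^{k-1}` and `s ∈ I^k` with `a = db + Ψ(s)` and `r = -ds`. -/
def SparkRel (dF : ∀ k, F k →+ F (k+1)) (dI : ∀ k, Ic k →+ Ic (k+1))
    (Ψ : ∀ k, Ic k →+ F k) (j : ∀ k, E k →+ F k) (k : ℕ) :
    AddSubgroup ↥(Sparks dF dI Ψ j k) where
  carrier := {p | ∃ s : Ic k,
      (p : F k × E (k+1) × Ic (k+1)).1 - Ψ k s ∈ Bc dF k ∧
      (p : F k × E (k+1) × Ic (k+1)).2.2 = -(dI k s)}
  add_mem' := by
    rintro p q ⟨s, hs1, hs2⟩ ⟨t, ht1, ht2⟩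
    refine ⟨s + t, ?_, ?_⟩
    · have := add_mem hs1 ht1
      simpa [Prod.fst_add, map_add, add_sub_add_comm] using this
    · simp [Prod.snd_add, hs2, ht2]
      abel
  zero_mem' := ⟨0, by simp [zero_mem], by simp⟩
  neg_mem' := by
    rintro p ⟨s, hs1, hs2⟩
    refine ⟨-s, ?_, ?_⟩
    · have := neg_mem hs1
      simpa [Prod.fst_neg, map_neg, neg_sub, sub_eq_add_neg, add_comm] using this
    · simp [Prod.snd_neg, hs2]
  
/-- The group `Ĥ^k(𝒮)` of spark classes of degree `k`. -/
abbrev SparkH (dF : ∀ k, F k →+ F (k+1)) (dI : ∀ k, Ic k →+ Ic (k+1))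
    (Ψ : ∀ k, Ic k →+ F k) (j : ∀ k, E k →+ F k) (k : ℕ) :=
  ↥(Sparks dF dI Ψ j k) ⧸ SparkRel dF dI Ψ j k

/-- The class of a spark in `Ĥ^k(𝒮)`. -/
def sparkMk (dF : ∀ k, F k →+ F (k+1)) (dI : ∀ k, Ic k →+ Ic (k+1))
    (Ψ : ∀ k, Ic k →+ F k) (j : ∀ k, E k →+ F k) (k : ℕ) :
    ↥(Sparks dF dI Ψ j k) →+ SparkH dF dI Ψ j k :=
  QuotientAddGroup.mk' _

end Spark

section ProjectiveSubmodules

universe u v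

theorem baer_quotient_of_projective_ideals {R Q : Type*} [Ring R] [AddCommGroup Q] [Module R Q]
    (hR : ∀ J : Ideal R, Module.Projective R J) (hQ : Module.Baer R Q) (K : Submodule R Q) :
    Module.Baer R (Q ⧸ K) := by
  intro J g
  have := hR J
  obtain ⟨lift, hlift⟩ := Module.projective_lifting_property K.mkQ g K.mkQ_surjective
  obtain ⟨extension, hextension⟩ := hQ J lift
  refine ⟨K.mkQ ∘ₗ extension, fun x hx => ?_⟩
  rw [LinearMap.comp_apply, hextension x hx, ← hlift, LinearMap.comp_apply]

theorem exists_injective_linearMap_baer (R : Type u) [Ring R] (M : Type (max u v))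
    [AddCommGroup M] [Module R M] :
    ∃ (Q : ModuleCat.{max u v} R) (ι : M →ₗ[R] Q), Module.Baer R Q ∧ Function.Injective ι := by
  have := ModuleCat.enoughInjectives.{v} R
  let Q : ModuleCat.{max u v} R := CategoryTheory.Injective.under (ModuleCat.of R M)
  let ι : ModuleCat.of R M ⟶ Q := CategoryTheory.Injective.ι (ModuleCat.of R M)
  have hQ : Module.Injective R Q := Module.injective_module_of_injective_object R Q
    (inj := CategoryTheory.Injective.injective_under (ModuleCat.of R M))
  have hι : CategoryTheory.Mono ι := CategoryTheory.Injective.ι_mono (ModuleCat.of R M)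
  exact ⟨Q, ι.hom, .of_injective hQ, (ModuleCat.mono_iff_injective ι).1 hι⟩

theorem projective_of_lifting_baer_mkQ (R : Type u) (N : Type v) [Ring R] [AddCommGroup N]
    [Module R N]
    (hlift : ∀ (Q : ModuleCat.{max u v} R) (K : Submodule R Q), Module.Baer R Q →
      ∀ φ : N →ₗ[R] Q ⧸ K, ∃ ψ : N →ₗ[R] Q, K.mkQ ∘ₗ ψ = φ) :
    Module.Projective R N := by
  refine .of_lifting_property'' fun π hπ => ?_
  obtain ⟨Q, ι, hQ, hι⟩ := exists_injective_linearMap_baer.{u, v} R (N →₀ R)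
  let K : Submodule R Q := (LinearMap.ker π).map ι
  let e := π.quotKerEquivOfSurjective hπ
  let φ : N →ₗ[R] Q ⧸ K :=
    (LinearMap.ker π).mapQ K ι (Submodule.le_comap_map _ _) ∘ₗ e.symm.toLinearMap
  have φ_π (a : N →₀ R) : φ (π a) = K.mkQ (ι a) := by
    have : e.symm (π a) = (LinearMap.ker π).mkQ a := e.symm_apply_eq.2 rfl
    simp only [φ, LinearMap.comp_apply, LinearEquiv.coe_coe, this, Submodule.mkQ_apply,
      Submodule.mapQ_apply]
  have mem_K_iff (a : N →₀ R) : ι a ∈ K ↔ π a = 0 := by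
    simp only [K, Submodule.mem_map, LinearMap.mem_ker, hι.eq_iff, exists_eq_right]
  obtain ⟨ψ, hψ⟩ := hlift Q K hQ φ
  have range_ψ (n : N) : ψ n ∈ LinearMap.range ι := by
    obtain ⟨a, rfl⟩ := hπ n
    have : K.mkQ (ψ (π a)) = K.mkQ (ι a) := by rw [← φ_π, ← hψ, LinearMap.comp_apply]
    obtain ⟨b, -, hb⟩ := (Submodule.Quotient.eq K).1 this
    exact ⟨a + b, by rw [map_add, hb, add_sub_cancel]⟩
  let σ : N →ₗ[R] N →₀ R :=
    (LinearEquiv.ofInjective ι hι).symm.toLinearMap ∘ₗ ψ.codRestrict (LinearMap.range ι) range_ψ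
  have ι_σ (n : N) : ι (σ n) = ψ n :=
    congrArg Subtype.val ((LinearEquiv.ofInjective ι hι).apply_symm_apply ⟨ψ n, range_ψ n⟩)
  refine ⟨σ, LinearMap.ext fun n => ?_⟩
  obtain ⟨a, rfl⟩ := hπ n
  have : ι (σ (π a) - a) ∈ K := by
    rw [map_sub, ι_σ, ← Submodule.Quotient.eq]
    exact (DFunLike.congr_fun hψ (π a)).trans (φ_π a)
  rw [mem_K_iff, map_sub, sub_eq_zero] at this
  exact this

/- Baer's criterion only tests ideals, so projective ideals make quotients of injectives injective;
maps out of submodules then extend along the inclusion before being lifted. -/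
theorem projective_submodule_of_projective_ideals {R : Type u} {P : Type v} [Ring R]
    [AddCommGroup P] [Module R P] [Module.Projective R P]
    (hR : ∀ J : Ideal R, Module.Projective R J) (N : Submodule R P) :
    Module.Projective R N := by
  refine projective_of_lifting_baer_mkQ R N fun Q K hQ φ => ?_
  obtain ⟨extension, hextension⟩ :=
    (baer_quotient_of_projective_ideals hR hQ K).extension_property
      N.subtype N.subtype_injective φ
  obtain ⟨lift, hlift⟩ := Module.projective_lifting_property K.mkQ extension K.mkQ_surjective
  exact ⟨lift ∘ₗ N.subtype, by rw [← LinearMap.comp_assoc, hlift, hextension]⟩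

theorem exists_extend_ker_of_projective_range {R M N A : Type*} [Ring R]
    [AddCommGroup M] [AddCommGroup N] [AddCommGroup A] [Module R M] [Module R N] [Module R A]
    (f : M →ₗ[R] N) [Module.Projective R (LinearMap.range f)] (g : LinearMap.ker f →ₗ[R] A) :
    ∃ h : M →ₗ[R] A, h ∘ₗ (LinearMap.ker f).subtype = g := by
  have hexact : Function.Exact (LinearMap.ker f).subtype f.rangeRestrict := by
    rw [LinearMap.exact_iff, LinearMap.ker_rangeRestrict, Submodule.range_subtype]
  have split := f.rangeRestrict.exists_rightInverse_of_surjective f.range_rangeRestrict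
  obtain ⟨retraction, hretraction⟩ := ((hexact.split_tfae (Submodule.subtype_injective _)
    f.surjective_rangeRestrict).out 0 1).1 split
  exact ⟨g ∘ₗ retraction, by rw [LinearMap.comp_assoc, hretraction, LinearMap.comp_id]⟩

end ProjectiveSubmodules

section Cochains

variable {I : ℕ → Type*} [∀ i, AddCommGroup (I i)] (bd : ∀ k, I (k + 1) →+ I k)

theorem exists_extend_cycles [∀ i, Module.Projective ℤ (I i)] {A : Type*} [AddCommGroup A] :
    ∀ (k : ℕ) (g : Zc bd k →+ A), ∃ h : I k →+ A, h.comp (Zc bd k).subtype = g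
  | 0, g => ⟨g.comp (topEquiv (G := I 0)).symm.toAddMonoidHom, rfl⟩
  | n + 1, g => by
    have := projective_submodule_of_projective_ideals (fun J : Ideal ℤ => inferInstance)
      (LinearMap.range (bd n).toIntLinearMap)
    obtain ⟨h, hh⟩ := exists_extend_ker_of_projective_range (bd n).toIntLinearMap
      (AddMonoidHom.toIntLinearMap (M := LinearMap.ker (bd n).toIntLinearMap) g)
    exact ⟨h.toAddMonoidHom, congrArg LinearMap.toAddMonoidHom hh⟩

theorem mem_Bc_codiff_iff {A : Type*} [AddCommGroup A] [DivisibleBy A ℤ] :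
    ∀ {k : ℕ} {h : I k →+ A}, h ∈ Bc (codiff bd A) k ↔ ∀ z ∈ Zc bd k, h z = 0
  | 0, h => ⟨fun hh z _ => DFunLike.congr_fun (mem_bot.1 hh) z,
      fun hh => mem_bot.2 (AddMonoidHom.ext fun z => hh z (mem_top z))⟩
  | n + 1, h => by
    constructor
    · rintro ⟨b, rfl⟩ z hz
      exact (congrArg b hz).trans (map_zero b)
    · intro hh
      obtain ⟨b, hb⟩ := (Module.Baer.of_divisible A).extension_property_addMonoidHom
        (QuotientAddGroup.kerLift (bd n)) (QuotientAddGroup.kerLift_injective _)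
        (QuotientAddGroup.lift (bd n).ker h hh)
      exact ⟨b, AddMonoidHom.ext fun x => DFunLike.congr_fun hb (x : I (n + 1) ⧸ (bd n).ker)⟩

theorem codiff_codiff (hbd : ∀ k x, bd k (bd (k + 1) x) = 0) {A : Type*} [AddCommGroup A] {k : ℕ}
    (h : I k →+ A) : codiff bd A (k + 1) (codiff bd A k h) = 0 :=
  AddMonoidHom.ext fun x => (congrArg h (hbd k x)).trans (map_zero h)

end Cochains

section Integrality

variable {𝕂 : Type*} [Field 𝕂]

theorem qZ_eq_zero_iff {x : 𝕂} : qZ 𝕂 x = 0 ↔ x ∈ intSub 𝕂 :=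
  QuotientAddGroup.eq_zero_iff x

theorem intCast_mem_intSub (n : ℤ) : (n : 𝕂) ∈ intSub 𝕂 :=
  mem_zmultiples_iff.2 ⟨n, zsmul_one n⟩

theorem exists_intCast_comp_eq [CharZero 𝕂] {A : Type*} [AddCommGroup A] {h : A →+ 𝕂}
    (hh : ∀ x, h x ∈ intSub 𝕂) : ∃ c : A →+ ℤ, (Int.castAddHom 𝕂).comp c = h := by
  let e := AddMonoidHom.ofInjective (f := Int.castAddHom 𝕂) Int.cast_injective
  have hrange (x : A) : h x ∈ (Int.castAddHom 𝕂).range := by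
    rw [Int.range_castAddHom]
    exact hh x
  refine ⟨e.symm.toAddMonoidHom.comp (h.codRestrict _ hrange), AddMonoidHom.ext fun x => ?_⟩
  exact congrArg Subtype.val (e.apply_symm_apply ⟨h x, hrange x⟩)

variable {I : ℕ → Type*} [∀ i, AddCommGroup (I i)] {k : ℕ}

theorem PhiMap_injective [CharZero 𝕂] :
    Function.Injective (PhiMap 𝕂 k : (I k →+ ℤ) →+ (I k →+ 𝕂)) :=
  fun _ _ h => AddMonoidHom.ext fun x => Int.cast_injective (DFunLike.congr_fun h x)

theorem codiff_PhiMap (bd : ∀ k, I (k + 1) →+ I k) (c : I k →+ ℤ) :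
    codiff bd 𝕂 k (PhiMap 𝕂 k c) = PhiMap 𝕂 (k + 1) (codiff bd ℤ k c) :=
  rfl

theorem exists_sub_PhiMap_mem_Bc [CharZero 𝕂] [∀ i, Module.Projective ℤ (I i)]
    (bd : ∀ k, I (k + 1) →+ I k) {T : I k →+ 𝕂} (hT : ∀ z ∈ Zc bd k, T z ∈ intSub 𝕂) :
    ∃ s : I k →+ ℤ, T - PhiMap 𝕂 k s ∈ Bc (codiff bd 𝕂) k := by
  obtain ⟨c, hc⟩ := exists_intCast_comp_eq (h := T.comp (Zc bd k).subtype) fun z => hT z z.2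
  obtain ⟨s, hs⟩ := exists_extend_cycles bd k c
  refine ⟨s, (mem_Bc_codiff_iff bd).2 fun z hz => sub_eq_zero.2 ?_⟩
  have hsc : s z = c ⟨z, hz⟩ := DFunLike.congr_fun hs ⟨z, hz⟩
  have hcT : (c ⟨z, hz⟩ : 𝕂) = T z := DFunLike.congr_fun hc ⟨z, hz⟩
  exact hcT.symm.trans (congrArg Int.cast hsc.symm)

end Integrality

section CheegerSimons

variable {𝕂 : Type*} [Field 𝕂] {I E : ℕ → Type*}
  [∀ i, AddCommGroup (I i)] [∀ i, AddCommGroup (E i)]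
  (bd : ∀ k, I (k + 1) →+ I k) (pair : ∀ k, E k →+ (I k →+ 𝕂)) {k : ℕ}

theorem eq_zero_of_pair_eq_PhiMap [CharZero 𝕂]
    (int_triv : ∀ e : E k, (∀ β : I k, pair k e β ∈ intSub 𝕂) → e = 0)
    {ω : E k} {c : I k →+ ℤ} (h : pair k ω = PhiMap 𝕂 k c) : ω = 0 ∧ c = 0 := by
  have hω : ω = 0 := int_triv ω fun β => h ▸ intCast_mem_intSub (c β)
  refine ⟨hω, PhiMap_injective (𝕂 := 𝕂) ?_⟩
  rw [← h, hω, map_zero, map_zero]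

theorem codiff_eq_zero_of_codiff_eq_sub [CharZero 𝕂]
    (hbd : ∀ k x, bd k (bd (k + 1) x) = 0) (d : ∀ k, E k →+ E (k + 1))
    (int_triv : ∀ (k : ℕ) (e : E k), (∀ β : I k, pair k e β ∈ intSub 𝕂) → e = 0)
    (stokes : ∀ (k : ℕ) (e : E k) (α : I (k + 1)), pair k e (bd k α) = pair (k + 1) (d k e) α)
    {T : I k →+ 𝕂} {ω : E (k + 1)} {c : I (k + 1) →+ ℤ}
    (h : codiff bd 𝕂 k T = pair (k + 1) ω - PhiMap 𝕂 (k + 1) c) : codiff bd ℤ (k + 1) c = 0 := by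
  have codiff_pair : codiff bd 𝕂 (k + 1) (pair (k + 1) ω) = pair (k + 2) (d (k + 1) ω) :=
    AddMonoidHom.ext (stokes (k + 1) ω)
  refine (eq_zero_of_pair_eq_PhiMap pair (int_triv _) (ω := d (k + 1) ω) ?_).2
  rw [← sub_eq_zero, ← codiff_pair, ← codiff_PhiMap, ← map_sub, ← h, codiff_codiff bd hbd]

/-- The spark group of the general spark complex `(Hom(I_•, 𝕂), E^•, Hom(I_•, ℤ))` associated
with a Cheeger–Simons model. -/
abbrev CSSparks (k : ℕ) : AddSubgroup ((I k →+ 𝕂) × E (k + 1) × (I (k + 1) →+ ℤ)) :=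
  Sparks (codiff bd 𝕂) (codiff bd ℤ) (PhiMap 𝕂) pair k

variable (hbd : ∀ k x, bd k (bd (k + 1) x) = 0)

/-- The differential character `q ∘ T|_Z` of a spark `(T, ω, c)`; on spark classes it becomes the
inverse of `GS`. -/
def sparkToDiffChar (k : ℕ) : CSSparks bd pair k →+ DiffChar bd hbd pair k where
  toFun p := ⟨((qZ 𝕂).comp p.1.1).comp (Zc bd k).subtype, p.1.2.1, fun β => by
    have hβ : p.1.1 (bd k β) = pair (k + 1) p.1.2.1 β - (p.1.2.2 β : 𝕂) :=
      DFunLike.congr_fun p.2.1 β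
    change qZ 𝕂 (p.1.1 (bd k β)) = _
    rw [hβ, map_sub, qZ_eq_zero_iff.2 (intCast_mem_intSub _), sub_zero]⟩
  map_zero' := Subtype.ext (AddMonoidHom.ext fun _ => map_zero (qZ 𝕂))
  map_add' p p' := Subtype.ext (AddMonoidHom.ext fun x => map_add (qZ 𝕂) (p.1.1 x) (p'.1.1 x))

theorem mem_ker_sparkToDiffChar_iff {p : CSSparks bd pair k} :
    p ∈ (sparkToDiffChar bd pair hbd k).ker ↔ ∀ z ∈ Zc bd k, p.1.1 z ∈ intSub 𝕂 := by
  simp only [AddMonoidHom.mem_ker, Subtype.ext_iff, DFunLike.ext_iff, Subtype.forall,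
    ← qZ_eq_zero_iff]
  rfl

theorem exists_lift_of_diffChar [CharZero 𝕂] [∀ i, Module.Projective ℤ (I i)]
    (f : DiffChar bd hbd pair k) :
    ∃ (T : I k →+ 𝕂) (ω : E (k + 1)) (c : I (k + 1) →+ ℤ),
      (∀ x : Zc bd k, qZ 𝕂 (T x) = f.1 x) ∧
      codiff bd 𝕂 k T = pair (k + 1) ω - PhiMap 𝕂 (k + 1) c := by
  obtain ⟨f, ω, hω⟩ := f
  obtain ⟨g, hg⟩ := exists_extend_cycles bd k f
  obtain ⟨T, hT⟩ := Module.projective_lifting_property (qZ 𝕂).toIntLinearMap g.toIntLinearMap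
    (QuotientAddGroup.mk'_surjective _)
  have lift (x : Zc bd k) : qZ 𝕂 (T x) = f x :=
    (DFunLike.congr_fun hT x.1).trans (DFunLike.congr_fun hg x)
  obtain ⟨c, hc⟩ := exists_intCast_comp_eq
    (h := pair (k + 1) ω - codiff bd 𝕂 k T.toAddMonoidHom) fun β => by
      change pair (k + 1) ω β - T (bd k β) ∈ intSub 𝕂
      rw [← qZ_eq_zero_iff, map_sub, ← hω, lift ⟨bd k β, mem_Zc_bd bd hbd k β⟩, sub_self]
  exact ⟨T.toAddMonoidHom, ω, c, lift, by rw [eq_sub_iff_add_eq', ← eq_sub_iff_add_eq]; exact hc⟩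

theorem ker_sparkToDiffChar [CharZero 𝕂] [∀ i, Module.Projective ℤ (I i)]
    (int_triv : ∀ (k : ℕ) (e : E k), (∀ β : I k, pair k e β ∈ intSub 𝕂) → e = 0) :
    (sparkToDiffChar bd pair hbd k).ker =
      SparkRel (codiff bd 𝕂) (codiff bd ℤ) (PhiMap 𝕂) pair k := by
  ext ⟨⟨T, ω, c⟩, hδT, hc⟩
  rw [mem_ker_sparkToDiffChar_iff]
  constructor
  · intro hT
    obtain ⟨s, hs⟩ := exists_sub_PhiMap_mem_Bc bd hT
    have hδs : codiff bd 𝕂 k (T - PhiMap 𝕂 k s) = 0 := AddMonoidHom.ext fun β =>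
      (mem_Bc_codiff_iff bd).1 hs _ (mem_Zc_bd bd hbd k β)
    have hω : pair (k + 1) ω = PhiMap 𝕂 (k + 1) (c + codiff bd ℤ k s) := by
      rw [map_sub, hδT, codiff_PhiMap, sub_sub, sub_eq_zero, ← map_add] at hδs
      exact hδs
    exact ⟨s, hs, eq_neg_of_add_eq_zero_left (eq_zero_of_pair_eq_PhiMap pair (int_triv _) hω).2⟩
  · rintro ⟨s, hs, -⟩ z hz
    have hTs : T z = s z := sub_eq_zero.1 ((mem_Bc_codiff_iff bd).1 hs z hz)
    exact hTs ▸ intCast_mem_intSub (s z)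

theorem sparkToDiffChar_surjective [CharZero 𝕂] [∀ i, Module.Projective ℤ (I i)]
    (d : ∀ k, E k →+ E (k + 1))
    (int_triv : ∀ (k : ℕ) (e : E k), (∀ β : I k, pair k e β ∈ intSub 𝕂) → e = 0)
    (stokes : ∀ (k : ℕ) (e : E k) (α : I (k + 1)), pair k e (bd k α) = pair (k + 1) (d k e) α) :
    Function.Surjective (sparkToDiffChar bd pair hbd k) := by
  intro f
  obtain ⟨T, ω, c, lift, hδT⟩ := exists_lift_of_diffChar bd pair hbd f
  exact ⟨⟨(T, ω, c), hδT, codiff_eq_zero_of_codiff_eq_sub bd pair hbd d int_triv stokes hδT⟩,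
    Subtype.ext (AddMonoidHom.ext lift)⟩

end CheegerSimons

theorem statement9_general
    {𝕂 : Type*} [Field 𝕂] [CharZero 𝕂]
    (I E : ℕ → Type*)
    [∀ i, AddCommGroup (I i)] [∀ i, Module.Free ℤ (I i)] [∀ i, AddCommGroup (E i)]
    (bd : ∀ k, I (k + 1) →+ I k)
    (hbd : ∀ k x, bd k (bd (k + 1) x) = 0)
    (d : ∀ k, E k →+ E (k + 1))
    (pair : ∀ k, E k →+ (I k →+ 𝕂))
    (int_triv : ∀ (k : ℕ) (e : E k), (∀ β : I k, pair k e β ∈ intSub 𝕂) → e = 0)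
    (stokes : ∀ (k : ℕ) (e : E k) (α : I (k + 1)), pair k e (bd k α) = pair (k + 1) (d k e) α)
    (k : ℕ) :
    ∃ GS : ↥(DiffChar bd hbd pair k) →+
        SparkH (codiff bd 𝕂) (codiff bd ℤ) (PhiMap 𝕂) pair k,
      (∀ f : ↥(DiffChar bd hbd pair k),
          ∃ (T : I k →+ 𝕂) (ω : E (k + 1)) (c : I (k + 1) →+ ℤ),
            (∀ x : ↥(Zc bd k), qZ 𝕂 (T x) = (f : ↥(Zc bd k) →+ KmodZ 𝕂) x) ∧
            codiff bd 𝕂 k T = pair (k + 1) ω - PhiMap 𝕂 (k + 1) c) ∧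
      (∀ (f : ↥(DiffChar bd hbd pair k)) (T : I k →+ 𝕂) (ω : E (k + 1))
          (c : I (k + 1) →+ ℤ),
          (∀ x : ↥(Zc bd k), qZ 𝕂 (T x) = (f : ↥(Zc bd k) →+ KmodZ 𝕂) x) →
          codiff bd 𝕂 k T = pair (k + 1) ω - PhiMap 𝕂 (k + 1) c →
          ∃ hsp : ((T, ω, c) : (I k →+ 𝕂) × E (k + 1) × (I (k + 1) →+ ℤ)) ∈
              Sparks (codiff bd 𝕂) (codiff bd ℤ) (PhiMap 𝕂) pair k,
            GS f = sparkMk (codiff bd 𝕂) (codiff bd ℤ) (PhiMap 𝕂) pair k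
              ⟨(T, ω, c), hsp⟩) ∧
      Function.Bijective GS := by
  let e := QuotientAddGroup.liftEquiv
    (SparkRel (codiff bd 𝕂) (codiff bd ℤ) (PhiMap 𝕂) pair k)
    (sparkToDiffChar_surjective bd pair hbd d int_triv stokes)
    (ker_sparkToDiffChar bd pair hbd int_triv).symm
  refine ⟨e.symm.toAddMonoidHom, exists_lift_of_diffChar bd pair hbd, ?_, e.symm.bijective⟩
  intro f T ω c lift hδT
  refine ⟨⟨hδT, codiff_eq_zero_of_codiff_eq_sub bd pair hbd d int_triv stokes hδT⟩, ?_⟩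
  exact e.symm_apply_eq.2 (Subtype.ext (AddMonoidHom.ext fun x => (lift x).symm))

/-- For a Cheeger–Simons model `(E^•, I_•, ∫)` with associated general
spark complex `𝒮 = (F^•, E^•, I^•)` (where `F^k = Hom(I_k, 𝕂)`, `I^k = Hom(I_k, ℤ)`,
`Ψ = Φ` is the inclusion and `E^•` is embedded via `ω ↦ ω̃`), the map
`GS : Diff^k(𝒞𝒮) → Ĥ^k(𝒮)`, `f ↦ [(T, ω̃, c)]` — where `T` is any lift of `f` and
`δT = ω̃ - c` — is a well-defined group isomorphism. -/
theorem statement9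
    {𝕂 : Type*} [Field 𝕂] [CharZero 𝕂]
    (I E : ℕ → Type*)
    [∀ i, AddCommGroup (I i)] [∀ i, Module.Free ℤ (I i)]
    [∀ i, AddCommGroup (E i)] [∀ i, Module 𝕂 (E i)]
    (bd : ∀ k, I (k+1) →+ I k)
    (hbd : ∀ k x, bd k (bd (k+1) x) = 0)
    (d : ∀ k, E k →+ E (k+1))
    (hd : ∀ k x, d (k+1) (d k x) = 0)
    (hdsmul : ∀ (k : ℕ) (c : 𝕂) (e : E k), d k (c • e) = c • d k e)
    (pair : ∀ k, E k →+ (I k →+ 𝕂))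
    (pair_smul : ∀ (k : ℕ) (c : 𝕂) (e : E k) (x : I k), pair k (c • e) x = c * pair k e x)
    (pair_injE : ∀ k, Function.Injective (pair k))
    (pair_injI : ∀ (k : ℕ) (x y : I k), (∀ e : E k, pair k e x = pair k e y) → x = y)
    (int_triv : ∀ (k : ℕ) (e : E k), (∀ β : I k, pair k e β ∈ intSub 𝕂) → e = 0)
    (stokes : ∀ (k : ℕ) (e : E k) (α : I (k+1)), pair k e (bd k α) = pair (k+1) (d k e) α)
    (deRham_inj : ∀ (k : ℕ) (e : E k), d k e = 0 → pair k e ∈ Bc (codiff bd 𝕂) k → e ∈ Bc d k)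
    (deRham_surj : ∀ (k : ℕ) (h : I k →+ 𝕂), codiff bd 𝕂 k h = 0 →
      ∃ e : E k, d k e = 0 ∧ h - pair k e ∈ Bc (codiff bd 𝕂) k)
    (k : ℕ) :
    ∃ GS : ↥(DiffChar bd hbd pair k) →+
        SparkH (codiff bd 𝕂) (codiff bd ℤ) (PhiMap 𝕂) pair k,
      (∀ f : ↥(DiffChar bd hbd pair k),
          ∃ (T : I k →+ 𝕂) (ω : E (k+1)) (c : I (k+1) →+ ℤ),
            (∀ x : ↥(Zc bd k), qZ 𝕂 (T x) = (f : ↥(Zc bd k) →+ KmodZ 𝕂) x) ∧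
            codiff bd 𝕂 k T = pair (k+1) ω - PhiMap 𝕂 (k+1) c) ∧
      (∀ (f : ↥(DiffChar bd hbd pair k)) (T : I k →+ 𝕂) (ω : E (k+1))
          (c : I (k+1) →+ ℤ),
          (∀ x : ↥(Zc bd k), qZ 𝕂 (T x) = (f : ↥(Zc bd k) →+ KmodZ 𝕂) x) →
          codiff bd 𝕂 k T = pair (k+1) ω - PhiMap 𝕂 (k+1) c →
          ∃ hsp : ((T, ω, c) : (I k →+ 𝕂) × E (k+1) × (I (k+1) →+ ℤ)) ∈
              Sparks (codiff bd 𝕂) (codiff bd ℤ) (PhiMap 𝕂) pair k,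
            GS f = sparkMk (codiff bd 𝕂) (codiff bd ℤ) (PhiMap 𝕂) pair k
              ⟨(T, ω, c), hsp⟩) ∧
      Function.Bijective GS := statement9_general I E bd hbd d pair int_triv stokes k

end
end

section
/- Let S = (F^•, E^•, I^•) be a general spark complex and k ≥ 0. The map δ₂ : Ĥ^k(S) → H^{k+1}(I^•), [(a, e, r)] ↦ [r], is a well-defined surjective group homomorphism; hence with Ĥ^k_E(S) := ker δ₂ there is a short exact sequence 0 → Ĥ^k_E(S) → Ĥ^k(S) → H^{k+1}(I^•) → 0. -/
open AddSubgroup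

noncomputable section

section SparkDelta

variable {F E Ic : ℕ → Type*}
  [∀ i, AddCommGroup (F i)] [∀ i, AddCommGroup (E i)] [∀ i, AddCommGroup (Ic i)]
  (dF : ∀ k, F k →+ F (k + 1)) (dI : ∀ k, Ic k →+ Ic (k + 1))
  (Ψ : ∀ k, Ic k →+ F k) (j : ∀ k, E k →+ F k) (k : ℕ)

/-- The projection `(a, e, r) ↦ r` from sparks of degree `k` to cocycles of degree `k + 1` in
`I^•`; it induces `δ₂` on spark classes. -/
def sparkCocycle : ↥(Sparks dF dI Ψ j k) →+ ↥(dI (k + 1)).ker where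
  toFun p := ⟨p.1.2.2, p.2.2⟩
  map_zero' := rfl
  map_add' _ _ := rfl

theorem sparkRel_le_ker_hmk_comp_sparkCocycle :
    SparkRel dF dI Ψ j k ≤ ((Hmk dI (k + 1)).comp (sparkCocycle dF dI Ψ j k)).ker := by
  rintro p ⟨s, -, hs⟩
  have hcob : p.1.2.2 ∈ Bc dI (k + 1) := ⟨-s, by rw [map_neg, hs]⟩
  exact (QuotientAddGroup.eq_zero_iff (sparkCocycle dF dI Ψ j k p)).2 (mem_addSubgroupOf.2 hcob)

/-- The homomorphism `δ₂ : Ĥ^k(𝒮) → H^{k+1}(I^•)` sending the class of a spark `(a, e, r)` to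
the cohomology class of `r`. -/
def sparkDelta₂ : SparkH dF dI Ψ j k →+ Hc dI (k + 1) :=
  QuotientAddGroup.lift _ ((Hmk dI (k + 1)).comp (sparkCocycle dF dI Ψ j k))
    (sparkRel_le_ker_hmk_comp_sparkCocycle dF dI Ψ j k)

theorem sparkDelta₂_sparkMk (p : ↥(Sparks dF dI Ψ j k)) :
    sparkDelta₂ dF dI Ψ j k (sparkMk dF dI Ψ j k p)
      = Hmk dI (k + 1) (sparkCocycle dF dI Ψ j k p) :=
  rfl

variable {dF dI Ψ j k}

theorem exists_sparkCocycle_eq {e : E (k + 1)} (r : ↥(dI (k + 1)).ker)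
    (he : Ψ (k + 1) r - j (k + 1) e ∈ Bc dF (k + 1)) :
    ∃ p, sparkCocycle dF dI Ψ j k p = r := by
  obtain ⟨a, ha⟩ : ∃ a, dF k a = Ψ (k + 1) r - j (k + 1) e := he
  have hspark : dF k (-a) = j (k + 1) e - Ψ (k + 1) r := by rw [map_neg, ha, neg_sub]
  exact ⟨⟨(-a, e, r), hspark, r.2⟩, rfl⟩

theorem sparkDelta₂_surjective
    (h_rep : ∀ r ∈ (dI (k + 1)).ker, ∃ e, Ψ (k + 1) r - j (k + 1) e ∈ Bc dF (k + 1)) :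
    Function.Surjective (sparkDelta₂ dF dI Ψ j k) := by
  intro y
  obtain ⟨r, rfl⟩ : ∃ r, Hmk dI (k + 1) r = y := QuotientAddGroup.mk'_surjective _ y
  obtain ⟨e, he⟩ := h_rep r r.2
  obtain ⟨p, rfl⟩ := exists_sparkCocycle_eq r he
  exact ⟨sparkMk dF dI Ψ j k p, sparkDelta₂_sparkMk dF dI Ψ j k p⟩

theorem statement11_general
    (h_rep : ∀ r ∈ (dI (k + 1)).ker, ∃ e, Ψ (k + 1) r - j (k + 1) e ∈ Bc dF (k + 1)) :
    ∃ δ₂ : SparkH dF dI Ψ j k →+ Hc dI (k + 1),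
      (∀ (p : ↥(Sparks dF dI Ψ j k))
          (hr : (p : F k × E (k + 1) × Ic (k + 1)).2.2 ∈ (dI (k + 1)).ker),
          δ₂ (sparkMk dF dI Ψ j k p)
            = Hmk dI (k + 1) ⟨(p : F k × E (k + 1) × Ic (k + 1)).2.2, hr⟩) ∧
      Function.Surjective δ₂ :=
  ⟨sparkDelta₂ dF dI Ψ j k, fun p _ => sparkDelta₂_sparkMk dF dI Ψ j k p,
    sparkDelta₂_surjective h_rep⟩

end SparkDelta

/-- The map `δ₂ : Ĥ^k(𝒮) → H^{k+1}(I^•)`, `[(a, e, r)] ↦ [r]`, is a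
well-defined surjective group homomorphism; hence with `Ĥ^k_E(𝒮) := ker δ₂` there is a
short exact sequence `0 → Ĥ^k_E(𝒮) → Ĥ^k(𝒮) → H^{k+1}(I^•) → 0`. -/
theorem statement11
    (F E Ic : ℕ → Type*)
    [∀ i, AddCommGroup (F i)] [∀ i, AddCommGroup (E i)] [∀ i, AddCommGroup (Ic i)]
    (dF : ∀ k, F k →+ F (k+1)) (hdF : ∀ k x, dF (k+1) (dF k x) = 0)
    (dE : ∀ k, E k →+ E (k+1)) (hdE : ∀ k x, dE (k+1) (dE k x) = 0)
    (dI : ∀ k, Ic k →+ Ic (k+1)) (hdI : ∀ k x, dI (k+1) (dI k x) = 0)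
    (Ψ : ∀ k, Ic k →+ F k) (hΨ : ∀ k x, Ψ (k+1) (dI k x) = dF k (Ψ k x))
    (j : ∀ k, E k →+ F k) (hj : ∀ k x, j (k+1) (dE k x) = dF k (j k x))
    (hjinj : ∀ k, Function.Injective (j k))
    (hiso_inj : ∀ (k : ℕ) (e : E k), dE k e = 0 → j k e ∈ Bc dF k → e ∈ Bc dE k)
    (hiso_surj : ∀ (k : ℕ) (a : F k), dF k a = 0 →
      ∃ e : E k, dE k e = 0 ∧ a - j k e ∈ Bc dF k)
    (k : ℕ) :
    ∃ δ₂ : SparkH dF dI Ψ j k →+ Hc dI (k+1),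
      (∀ (p : ↥(Sparks dF dI Ψ j k))
          (hr : (p : F k × E (k+1) × Ic (k+1)).2.2 ∈ (dI (k+1)).ker),
          δ₂ (sparkMk dF dI Ψ j k p)
            = Hmk dI (k+1) ⟨(p : F k × E (k+1) × Ic (k+1)).2.2, hr⟩) ∧
      Function.Surjective δ₂ := by
  refine statement11_general fun r hr => ?_
  have hΨr : dF (k + 1) (Ψ (k + 1) r) = 0 := by rw [← hΨ, hr, map_zero]
  exact (hiso_surj (k + 1) (Ψ (k + 1) r) hΨr).imp fun _ he => he.2

end
end

section
/- Let S = (F^•, E^•, I^•) be a general spark complex and k ≥ 0. There is a short exact sequence of abelian groups 0 → H^k(E^•)/H^k_I(E^•) → Ĥ^k_E(S) → dE^k → 0, where dE^k ⊆ E^{k+1} is the group of exact elements of degree k+1 of E^•, the surjection sends a spark class [(a, e, r)] with [r] = 0 in H^{k+1}(I^•) to its middle component e (which is then necessarily exact in E^•), and the first map sends the class of a d-closed α ∈ E^k to the spark class [(α, 0, 0)]. -/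
open AddSubgroup

noncomputable section

/-!
A class in the kernel of `δ₂` has a representative `(a, e, 0)` with `da = j e`: if `r = dt`, add
`Ψ t` to `a`. So such a class is given by a primitive `a` in `F` of an element `e` of `E`. Since
`H^{k+1}(E) → H^{k+1}(F)` is injective, `e` has such a primitive exactly when it is exact in `E`.
For `e = 0` the primitive is a cocycle of `F`, and since `H^k(E) → H^k(F)` is surjective it is
cohomologous to some `j α` with `α` closed; hence the class is that of `(j α, 0, 0)`.
-/

section Cohomology

variable {F E : ℕ → Type*} [∀ i, AddCommGroup (F i)] [∀ i, AddCommGroup (E i)]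
  {dF : ∀ k, F k →+ F (k + 1)} {dE : ∀ k, E k →+ E (k + 1)} {k : ℕ}

theorem Bc_le_ker (hdF : ∀ k x, dF (k + 1) (dF k x) = 0) : ∀ k, Bc dF k ≤ (dF k).ker
  | 0 => bot_le
  | n + 1 => by
    rintro _ ⟨x, rfl⟩
    exact hdF n x

theorem map_mem_Bc {j : ∀ k, E k →+ F k} (hj : ∀ k x, j (k + 1) (dE k x) = dF k (j k x)) :
    ∀ {k : ℕ} {x : E k}, x ∈ Bc dE k → j k x ∈ Bc dF k
  | 0, x, hx => by
    rw [show x = 0 from hx, map_zero]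
    exact zero_mem _
  | n + 1, _, ⟨y, hy⟩ => ⟨j n y, by rw [← hj, hy]⟩

theorem Hmk_surjective (d : ∀ k, E k →+ E (k + 1)) (k : ℕ) : Function.Surjective (Hmk d k) :=
  QuotientAddGroup.mk'_surjective _

theorem Hmk_eq_zero_iff {x : (dE k).ker} : Hmk dE k x = 0 ↔ (x : E k) ∈ Bc dE k :=
  (QuotientAddGroup.eq_zero_iff x).trans AddSubgroup.mem_addSubgroupOf

end Cohomology

section SparkClasses

variable {F E Ic : ℕ → Type*}
  [∀ i, AddCommGroup (F i)] [∀ i, AddCommGroup (E i)] [∀ i, AddCommGroup (Ic i)]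
  {dF : ∀ k, F k →+ F (k + 1)} {dE : ∀ k, E k →+ E (k + 1)} {dI : ∀ k, Ic k →+ Ic (k + 1)}
  {Ψ : ∀ k, Ic k →+ F k} {j : ∀ k, E k →+ F k} {k : ℕ}

variable (dF dI Ψ j k) in
theorem sparkMk_surjective : Function.Surjective (sparkMk dF dI Ψ j k) :=
  QuotientAddGroup.mk'_surjective _

theorem sparkMk_eq_zero_iff {p : Sparks dF dI Ψ j k} :
    sparkMk dF dI Ψ j k p = 0 ↔ ∃ s : Ic k, p.1.1 - Ψ k s ∈ Bc dF k ∧ p.1.2.2 = -dI k s :=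
  QuotientAddGroup.eq_zero_iff p

theorem sparkMk_eq_sparkMk_iff {p q : Sparks dF dI Ψ j k} :
    sparkMk dF dI Ψ j k p = sparkMk dF dI Ψ j k q ↔
      ∃ s : Ic k, p.1.1 - q.1.1 - Ψ k s ∈ Bc dF k ∧ p.1.2.2 - q.1.2.2 = -dI k s :=
  QuotientAddGroup.eq_iff_sub_mem

theorem mk_zero_mem_Sparks_iff {a : F k} {e : E (k + 1)} :
    (a, e, 0) ∈ Sparks dF dI Ψ j k ↔ dF k a = j (k + 1) e := by
  simp [Sparks]

variable (dF dI Ψ j k) in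
/-- The map `δ₂ : Ĥ^k(𝒮) → H^{k+1}(I^•)`, `[(a, e, r)] ↦ [r]`; its kernel is `Ĥ^k_E(𝒮)`. -/
def sparkδ₂ : SparkH dF dI Ψ j k →+ Hc dI (k + 1) :=
  QuotientAddGroup.lift _
    (AddMonoidHom.mk' (fun p ↦ Hmk dI (k + 1) ⟨p.1.2.2, p.2.2⟩) fun _ _ ↦ rfl)
    fun _ ⟨s, _, hr⟩ ↦ Hmk_eq_zero_iff.2 ⟨-s, (map_neg _ s).trans hr.symm⟩

theorem sparkδ₂_sparkMk (p : Sparks dF dI Ψ j k) :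
    sparkδ₂ dF dI Ψ j k (sparkMk dF dI Ψ j k p) = Hmk dI (k + 1) ⟨p.1.2.2, p.2.2⟩ :=
  rfl

theorem sparkMk_mem_ker_sparkδ₂_iff {p : Sparks dF dI Ψ j k} :
    sparkMk dF dI Ψ j k p ∈ (sparkδ₂ dF dI Ψ j k).ker ↔ ∃ t, dI k t = p.1.2.2 := by
  rw [AddMonoidHom.mem_ker, sparkδ₂_sparkMk, Hmk_eq_zero_iff]
  rfl

theorem sparkMk_mk_zero_mem_ker_sparkδ₂ {a : F k} {e : E (k + 1)}
    (h : (a, e, 0) ∈ Sparks dF dI Ψ j k) :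
    sparkMk dF dI Ψ j k ⟨(a, e, 0), h⟩ ∈ (sparkδ₂ dF dI Ψ j k).ker :=
  sparkMk_mem_ker_sparkδ₂_iff.2 ⟨0, map_zero _⟩

theorem exists_sparkMk_mk_zero_eq_of_mem_ker_sparkδ₂
    (hΨ : ∀ k x, Ψ (k + 1) (dI k x) = dF k (Ψ k x)) {x : SparkH dF dI Ψ j k}
    (hx : x ∈ (sparkδ₂ dF dI Ψ j k).ker) :
    ∃ (a : F k) (e : E (k + 1)) (h : (a, e, 0) ∈ Sparks dF dI Ψ j k),
      x = sparkMk dF dI Ψ j k ⟨(a, e, 0), h⟩ := by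
  obtain ⟨⟨⟨a, e, r⟩, hda, _⟩, rfl⟩ := sparkMk_surjective dF dI Ψ j k x
  obtain ⟨t, rfl : dI k t = r⟩ := sparkMk_mem_ker_sparkδ₂_iff.1 hx
  replace hda : dF k a = j (k + 1) e - Ψ (k + 1) (dI k t) := hda
  refine ⟨a + Ψ k t, e, mk_zero_mem_Sparks_iff.2 ?_, sparkMk_eq_sparkMk_iff.2 ⟨-t, ?_, ?_⟩⟩
  · rw [map_add, hda, hΨ, sub_add_cancel]
  all_goals simp

theorem middle_eq_zero_of_mem_SparkRel (hdF : ∀ k x, dF (k + 1) (dF k x) = 0)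
    (hΨ : ∀ k x, Ψ (k + 1) (dI k x) = dF k (Ψ k x)) (hjinj : ∀ k, Function.Injective (j k))
    {p : Sparks dF dI Ψ j k} (hp : p ∈ SparkRel dF dI Ψ j k) : p.1.2.1 = 0 := by
  obtain ⟨s, ha, hr⟩ := hp
  have hda : dF k p.1.1 = dF k (Ψ k s) := sub_eq_zero.1 <| by
    rw [← map_sub]
    exact Bc_le_ker hdF k ha
  have hje : j (k + 1) p.1.2.1 = 0 := by
    simpa [hr, hda, hΨ] using p.2.1
  exact (map_eq_zero_iff _ (hjinj (k + 1))).1 hje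

section ClosedSpark

variable (dI Ψ) (hj : ∀ k x, j (k + 1) (dE k x) = dF k (j k x))

/-- The spark `(α, 0, 0)` of a closed `α ∈ E^k`, regarded as an element of `F^k` through `j`. -/
def closedSpark (k : ℕ) : (dE k).ker →+ Sparks dF dI Ψ j k :=
  AddMonoidHom.mk'
    (fun α ↦ ⟨(j k α, 0, 0), mk_zero_mem_Sparks_iff.2 <| by
      rw [← hj, AddMonoidHom.mem_ker.1 α.2, map_zero]⟩)
    fun α β ↦ by ext <;> simp

/-- The map `H^k(E^•) → Ĥ^k_E(𝒮)`, `[α] ↦ [(α, 0, 0)]`. -/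
def sparkι (k : ℕ) : Hc dE k →+ (sparkδ₂ dF dI Ψ j k).ker :=
  QuotientAddGroup.lift _
    (((sparkMk dF dI Ψ j k).comp (closedSpark dI Ψ hj k)).codRestrict _
      fun α ↦ sparkMk_mk_zero_mem_ker_sparkδ₂ (closedSpark dI Ψ hj k α).2)
    fun α hα ↦ Subtype.ext <| sparkMk_eq_zero_iff.2
      ⟨0, by simpa [closedSpark] using map_mem_Bc hj hα, by simp [closedSpark]⟩

theorem sparkι_Hmk (α : (dE k).ker) :
    sparkι dI Ψ hj k (Hmk dE k α) = ⟨sparkMk dF dI Ψ j k (closedSpark dI Ψ hj k α),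
      sparkMk_mk_zero_mem_ker_sparkδ₂ (closedSpark dI Ψ hj k α).2⟩ :=
  rfl

theorem sparkι_Hmk_eq_zero_iff (α : (dE k).ker) :
    sparkι dI Ψ hj k (Hmk dE k α) = 0 ↔ ∃ u : Ic k, dI k u = 0 ∧ j k α - Ψ k u ∈ Bc dF k := by
  refine Subtype.ext_iff.trans (sparkMk_eq_zero_iff.trans ?_)
  simp [closedSpark, and_comm, eq_comm]

end ClosedSpark

section Curvature

variable (hdF : ∀ k x, dF (k + 1) (dF k x) = 0)
  (hΨ : ∀ k x, Ψ (k + 1) (dI k x) = dF k (Ψ k x)) (hjinj : ∀ k, Function.Injective (j k))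

/-- The curvature map `δ₁ : Ĥ^k(𝒮) → E^{k+1}`, `[(a, e, r)] ↦ e`. -/
def sparkδ₁ (k : ℕ) : SparkH dF dI Ψ j k →+ E (k + 1) :=
  QuotientAddGroup.lift _ (AddMonoidHom.mk' (fun p ↦ p.1.2.1) fun _ _ ↦ rfl)
    fun _ ↦ middle_eq_zero_of_mem_SparkRel hdF hΨ hjinj

theorem sparkδ₁_sparkMk (p : Sparks dF dI Ψ j k) :
    sparkδ₁ hdF hΨ hjinj k (sparkMk dF dI Ψ j k p) = p.1.2.1 :=
  rfl

theorem range_domRestrict_sparkδ₁ (hj : ∀ k x, j (k + 1) (dE k x) = dF k (j k x))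
    (hH_inj : ∀ e : E (k + 1),
      dE (k + 1) e = 0 → j (k + 1) e ∈ Bc dF (k + 1) → e ∈ Bc dE (k + 1)) :
    ((sparkδ₁ hdF hΨ hjinj k).domRestrict (sparkδ₂ dF dI Ψ j k).ker).range = Bc dE (k + 1) := by
  ext e
  constructor
  · rintro ⟨⟨x, hx⟩, rfl⟩
    obtain ⟨a, e, h, rfl⟩ := exists_sparkMk_mk_zero_eq_of_mem_ker_sparkδ₂ hΨ hx
    have hda : dF k a = j (k + 1) e := mk_zero_mem_Sparks_iff.1 h
    have hde : dE (k + 1) e = 0 := hjinj _ <| by rw [hj, ← hda, hdF, map_zero]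
    exact hH_inj e hde ⟨a, hda⟩
  · rintro ⟨α, rfl⟩
    have h : (j k α, dE k α, 0) ∈ Sparks dF dI Ψ j k := mk_zero_mem_Sparks_iff.2 (hj k α).symm
    exact ⟨⟨_, sparkMk_mk_zero_mem_ker_sparkδ₂ h⟩, rfl⟩

theorem exact_sparkι_domRestrict_sparkδ₁ (hj : ∀ k x, j (k + 1) (dE k x) = dF k (j k x))
    (hH_surj : ∀ a : F k, dF k a = 0 → ∃ α : E k, dE k α = 0 ∧ a - j k α ∈ Bc dF k) :
    Function.Exact (sparkι dI Ψ hj k)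
      ((sparkδ₁ hdF hΨ hjinj k).domRestrict (sparkδ₂ dF dI Ψ j k).ker) := by
  rintro ⟨x, hx⟩
  constructor
  · intro hεx
    obtain ⟨a, e, h, rfl⟩ := exists_sparkMk_mk_zero_eq_of_mem_ker_sparkδ₂ hΨ hx
    obtain rfl : e = 0 := hεx
    have hda : dF k a = 0 := by rw [mk_zero_mem_Sparks_iff.1 h, map_zero]
    obtain ⟨α, hα, haα⟩ := hH_surj a hda
    have hclass : sparkMk dF dI Ψ j k ⟨(a, 0, 0), h⟩ =
        sparkMk dF dI Ψ j k (closedSpark dI Ψ hj k ⟨α, hα⟩) :=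
      sparkMk_eq_sparkMk_iff.2 ⟨0, by simpa [closedSpark] using haα, by simp [closedSpark]⟩
    exact ⟨Hmk dE k ⟨α, hα⟩, Subtype.ext hclass.symm⟩
  · rintro ⟨y, hy⟩
    obtain ⟨α, rfl⟩ := Hmk_surjective dE k y
    rw [← hy]
    rfl

end Curvature

end SparkClasses

theorem statement12_general
    (F E Ic : ℕ → Type*)
    [∀ i, AddCommGroup (F i)] [∀ i, AddCommGroup (E i)] [∀ i, AddCommGroup (Ic i)]
    (dF : ∀ k, F k →+ F (k + 1)) (hdF : ∀ k x, dF (k + 1) (dF k x) = 0)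
    (dE : ∀ k, E k →+ E (k + 1)) (_hdE : ∀ k x, dE (k + 1) (dE k x) = 0)
    (dI : ∀ k, Ic k →+ Ic (k + 1)) (_hdI : ∀ k x, dI (k + 1) (dI k x) = 0)
    (Ψ : ∀ k, Ic k →+ F k) (hΨ : ∀ k x, Ψ (k + 1) (dI k x) = dF k (Ψ k x))
    (j : ∀ k, E k →+ F k) (hj : ∀ k x, j (k + 1) (dE k x) = dF k (j k x))
    (hjinj : ∀ k, Function.Injective (j k))
    (k : ℕ)
    (hH_inj : ∀ e : E (k + 1), dE (k + 1) e = 0 → j (k + 1) e ∈ Bc dF (k + 1) → e ∈ Bc dE (k + 1))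
    (hH_surj : ∀ a : F k, dF k a = 0 → ∃ α : E k, dE k α = 0 ∧ a - j k α ∈ Bc dF k) :
    ∃ (δ₂ : SparkH dF dI Ψ j k →+ Hc dI (k + 1)),
      (∀ (p : ↥(Sparks dF dI Ψ j k))
          (hr : (p : F k × E (k + 1) × Ic (k + 1)).2.2 ∈ (dI (k + 1)).ker),
          δ₂ (sparkMk dF dI Ψ j k p)
            = Hmk dI (k + 1) ⟨(p : F k × E (k + 1) × Ic (k + 1)).2.2, hr⟩) ∧
      ∃ (ι : Hc dE k →+ ↥δ₂.ker) (ε : ↥δ₂.ker →+ E (k + 1)),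
        (∀ (α : E k) (hα : α ∈ (dE k).ker),
            ∃ (hsp : ((j k α, 0, 0) : F k × E (k + 1) × Ic (k + 1)) ∈ Sparks dF dI Ψ j k)
              (hker : sparkMk dF dI Ψ j k ⟨(j k α, 0, 0), hsp⟩ ∈ δ₂.ker),
              ι (Hmk dE k ⟨α, hα⟩) = ⟨sparkMk dF dI Ψ j k ⟨(j k α, 0, 0), hsp⟩, hker⟩) ∧
        (∀ (α : E k) (hα : α ∈ (dE k).ker),
            ι (Hmk dE k ⟨α, hα⟩) = 0 ↔
              ∃ u : Ic k, dI k u = 0 ∧ j k α - Ψ k u ∈ Bc dF k) ∧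
        (∀ (p : ↥(Sparks dF dI Ψ j k)) (h : sparkMk dF dI Ψ j k p ∈ δ₂.ker),
            ε ⟨sparkMk dF dI Ψ j k p, h⟩ = (p : F k × E (k + 1) × Ic (k + 1)).2.1) ∧
        (∀ e : E (k + 1), (∃ x, ε x = e) ↔ e ∈ Bc dE (k + 1)) ∧
        (∀ x, ε x = 0 ↔ x ∈ ι.range) := by
  refine ⟨sparkδ₂ dF dI Ψ j k, fun p _ ↦ sparkδ₂_sparkMk p, sparkι dI Ψ hj k,
    (sparkδ₁ hdF hΨ hjinj k).domRestrict _, ?_, ?_, ?_, ?_, ?_⟩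
  · exact fun α hα ↦ ⟨_, _, sparkι_Hmk dI Ψ hj ⟨α, hα⟩⟩
  · exact fun α hα ↦ sparkι_Hmk_eq_zero_iff dI Ψ hj ⟨α, hα⟩
  · exact fun p _ ↦ sparkδ₁_sparkMk hdF hΨ hjinj p
  · exact SetLike.ext_iff.1 (range_domRestrict_sparkδ₁ hdF hΨ hjinj hj hH_inj)
  · exact exact_sparkι_domRestrict_sparkδ₁ hdF hΨ hjinj hj hH_surj

/-- With `δ₂ : Ĥ^k(𝒮) → H^{k+1}(I^•)`, `[(a, e, r)] ↦ [r]`, and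
`Ĥ^k_E(𝒮) := ker δ₂`, there is a short exact sequence
`0 → H^k(E^•)/H^k_I(E^•) → Ĥ^k_E(𝒮) → dE^k → 0`,
where the surjection sends a spark class `[(a, e, r)]` with `[r] = 0` to its (necessarily
exact) middle component `e`, and the first map sends the class of a closed `α ∈ E^k` to
the spark class `[(α, 0, 0)]`. -/
theorem statement12
    (F E Ic : ℕ → Type*)
    [∀ i, AddCommGroup (F i)] [∀ i, AddCommGroup (E i)] [∀ i, AddCommGroup (Ic i)]
    (dF : ∀ k, F k →+ F (k+1)) (hdF : ∀ k x, dF (k+1) (dF k x) = 0)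
    (dE : ∀ k, E k →+ E (k+1)) (hdE : ∀ k x, dE (k+1) (dE k x) = 0)
    (dI : ∀ k, Ic k →+ Ic (k+1)) (hdI : ∀ k x, dI (k+1) (dI k x) = 0)
    (Ψ : ∀ k, Ic k →+ F k) (hΨ : ∀ k x, Ψ (k+1) (dI k x) = dF k (Ψ k x))
    (j : ∀ k, E k →+ F k) (hj : ∀ k x, j (k+1) (dE k x) = dF k (j k x))
    (hjinj : ∀ k, Function.Injective (j k))
    (hiso_inj : ∀ (k : ℕ) (e : E k), dE k e = 0 → j k e ∈ Bc dF k → e ∈ Bc dE k)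
    (hiso_surj : ∀ (k : ℕ) (a : F k), dF k a = 0 →
      ∃ e : E k, dE k e = 0 ∧ a - j k e ∈ Bc dF k)
    (k : ℕ) :
    ∃ (δ₂ : SparkH dF dI Ψ j k →+ Hc dI (k+1)),
      (∀ (p : ↥(Sparks dF dI Ψ j k))
          (hr : (p : F k × E (k+1) × Ic (k+1)).2.2 ∈ (dI (k+1)).ker),
          δ₂ (sparkMk dF dI Ψ j k p)
            = Hmk dI (k+1) ⟨(p : F k × E (k+1) × Ic (k+1)).2.2, hr⟩) ∧
      ∃ (ι : Hc dE k →+ ↥δ₂.ker) (ε : ↥δ₂.ker →+ E (k+1)),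
        (∀ (α : E k) (hα : α ∈ (dE k).ker),
            ∃ (hsp : ((j k α, 0, 0) : F k × E (k+1) × Ic (k+1)) ∈ Sparks dF dI Ψ j k)
              (hker : sparkMk dF dI Ψ j k ⟨(j k α, 0, 0), hsp⟩ ∈ δ₂.ker),
              ι (Hmk dE k ⟨α, hα⟩) = ⟨sparkMk dF dI Ψ j k ⟨(j k α, 0, 0), hsp⟩, hker⟩) ∧
        (∀ (α : E k) (hα : α ∈ (dE k).ker),
            ι (Hmk dE k ⟨α, hα⟩) = 0 ↔
              ∃ u : Ic k, dI k u = 0 ∧ j k α - Ψ k u ∈ Bc dF k) ∧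
        (∀ (p : ↥(Sparks dF dI Ψ j k)) (h : sparkMk dF dI Ψ j k p ∈ δ₂.ker),
            ε ⟨sparkMk dF dI Ψ j k p, h⟩ = (p : F k × E (k+1) × Ic (k+1)).2.1) ∧
        (∀ e : E (k+1), (∃ x, ε x = e) ↔ e ∈ Bc dE (k+1)) ∧
        (∀ x, ε x = 0 ↔ x ∈ ι.range) := by
  exact statement12_general F E Ic dF hdF dE hdE dI hdI Ψ hΨ j hj hjinj k
    (hiso_inj (k + 1)) (hiso_surj k)

end
end

section
/- Let S = (F^•, E^•, I^•) be a general spark complex and k ≥ 0, and let G be the mapping cone complex of Ψ : I^• → F^•, so that H^k(G) is the group of pairs (a, r) ∈ F^k ⊕ I^{k+1} with dr = 0 and da = −Ψ(r), modulo pairs of the form (db + Ψ(s), −ds) with (b, s) ∈ F^{k−1} ⊕ I^k. Then there is a short exact sequence 0 → H^k(G) → Ĥ^k(S) → Z^{k+1}_I(E^•) → 0, where the first map sends the class of (a, r) to the spark class [(a, 0, r)], and the second map is δ₁([(a, e, r)]) = e. -/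
open AddSubgroup

noncomputable section

section Cone

variable {F E Ic : ℕ → Type*}
  [∀ i, AddCommGroup (F i)] [∀ i, AddCommGroup (E i)] [∀ i, AddCommGroup (Ic i)]

/-- Degree-`k` cocycles of the mapping cone of `Ψ : I^• → F^•`: pairs
`(a, r) ∈ F^k ⊕ I^{k+1}` with `dr = 0` and `da = -Ψ(r)`. -/
def Cone (dF : ∀ k, F k →+ F (k+1)) (dI : ∀ k, Ic k →+ Ic (k+1))
    (Ψ : ∀ k, Ic k →+ F k) (k : ℕ) : AddSubgroup (F k × Ic (k+1)) where
  carrier := {p | dI (k+1) p.2 = 0 ∧ dF k p.1 = -(Ψ (k+1) p.2)}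
  add_mem' := by
    rintro p q ⟨h1, h2⟩ ⟨h1', h2'⟩
    refine ⟨?_, ?_⟩ <;> simp [Prod.fst_add, Prod.snd_add, h1, h1', h2, h2'] <;> abel
  zero_mem' := by simp
  neg_mem' := by
    rintro p ⟨h1, h2⟩
    refine ⟨?_, ?_⟩ <;> simp [Prod.fst_neg, Prod.snd_neg, h1, h2]

/-- Degree-`k` coboundaries of the mapping cone of `Ψ : I^• → F^•`: the subgroup of
cone cocycles of the form `(db + Ψ(s), -ds)` with `(b, s) ∈ F^{k-1} ⊕ I^k`. -/
def ConeRel (dF : ∀ k, F k →+ F (k+1)) (dI : ∀ k, Ic k →+ Ic (k+1))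
    (Ψ : ∀ k, Ic k →+ F k) (k : ℕ) : AddSubgroup ↥(Cone dF dI Ψ k) where
  carrier := {p | ∃ s : Ic k,
      (p : F k × Ic (k+1)).1 - Ψ k s ∈ Bc dF k ∧
      (p : F k × Ic (k+1)).2 = -(dI k s)}
  add_mem' := by
    rintro p q ⟨s, hs1, hs2⟩ ⟨t, ht1, ht2⟩
    refine ⟨s + t, ?_, ?_⟩
    · have := add_mem hs1 ht1
      simpa [Prod.fst_add, map_add, add_sub_add_comm] using this
    · simp [Prod.snd_add, hs2, ht2]
      abel
  zero_mem' := ⟨0, by simp [zero_mem], by simp⟩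
  neg_mem' := by
    rintro p ⟨s, hs1, hs2⟩
    refine ⟨-s, ?_, ?_⟩
    · have := neg_mem hs1
      simpa [Prod.fst_neg, map_neg, neg_sub, sub_eq_add_neg, add_comm] using this
    · simp [Prod.snd_neg, hs2]

/-- The degree-`k` cohomology `H^k(G)` of the mapping cone `G` of `Ψ : I^• → F^•`. -/
abbrev ConeH (dF : ∀ k, F k →+ F (k+1)) (dI : ∀ k, Ic k →+ Ic (k+1))
    (Ψ : ∀ k, Ic k →+ F k) (k : ℕ) :=
  ↥(Cone dF dI Ψ k) ⧸ ConeRel dF dI Ψ k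

/-- The class in `H^k(G)` of a cocycle of the mapping cone. -/
def coneMk (dF : ∀ k, F k →+ F (k+1)) (dI : ∀ k, Ic k →+ Ic (k+1))
    (Ψ : ∀ k, Ic k →+ F k) (k : ℕ) : ↥(Cone dF dI Ψ k) →+ ConeH dF dI Ψ k :=
  QuotientAddGroup.mk' _

end Cone

/-! The sequence is already exact before passing to classes: the sparks with `e = 0` are the cone
cocycles, and the forms `e` occurring in sparks are exactly the elements of `Z^{k+1}_I(E^•)`, since
`da = e - Ψ(r)` says that `e` and `Ψ(r)` are cohomologous in `F^•`. A spark equivalent to zero has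
`e = 0`, because its `F`-component is `db + Ψ(s)` and so has differential `Ψ(ds) = -Ψ(r)`. Hence the
equivalence relation lives entirely in the cone, where it is that of coboundaries, and dividing it
out preserves exactness. -/

section QuotientSequence

variable {A B C : Type*} [AddGroup A] [AddGroup B] [AddGroup C]
  {f : A →+ B} {g : B →+ C} {M : AddSubgroup A} {N : AddSubgroup B} [M.Normal] [N.Normal]

theorem quotientMap_injective_of_eq_comap (h : M = N.comap f) :
    Function.Injective (QuotientAddGroup.map M N f h.le) := by
  rw [← AddMonoidHom.ker_eq_bot_iff, QuotientAddGroup.ker_map, ← h, QuotientAddGroup.map_mk'_self]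

theorem range_quotientLift (hg : N ≤ g.ker) : (QuotientAddGroup.lift N g hg).range = g.range := by
  ext c
  exact (QuotientAddGroup.mk'_surjective N).exists

theorem ker_quotientLift_eq_range_quotientMap (hf : M ≤ N.comap f) (hg : N ≤ g.ker)
    (hfg : g.ker = f.range) :
    (QuotientAddGroup.lift N g hg).ker = (QuotientAddGroup.map M N f hf).range := by
  calc (QuotientAddGroup.lift N g hg).ker
      = f.range.map (QuotientAddGroup.mk' N) := by rw [QuotientAddGroup.ker_lift, hfg]
    _ = ((QuotientAddGroup.mk' N).comp f).range := AddMonoidHom.map_range _ _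
    _ = (QuotientAddGroup.map M N f hf).range := (range_quotientLift _).symm

end QuotientSequence

theorem Bc_le_ker_s13 {F : ℕ → Type*} [∀ i, AddCommGroup (F i)] {d : ∀ k, F k →+ F (k + 1)}
    (hd : ∀ k x, d (k + 1) (d k x) = 0) : ∀ k, Bc d k ≤ (d k).ker
  | 0 => bot_le
  | n + 1 => (AddMonoidHom.range_le_ker_iff _ _).2 (AddMonoidHom.ext (hd n))

section SparkSequence

variable {F E Ic : ℕ → Type*}
  [∀ i, AddCommGroup (F i)] [∀ i, AddCommGroup (E i)] [∀ i, AddCommGroup (Ic i)]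
  (dF : ∀ k, F k →+ F (k + 1)) (dE : ∀ k, E k →+ E (k + 1)) (dI : ∀ k, Ic k →+ Ic (k + 1))
  (Ψ : ∀ k, Ic k →+ F k) (j : ∀ k, E k →+ F k) (k : ℕ)

/-- The group `Z^k_I(E^•)` of cocycles of `E^•` whose class in `H^k(F^•)` lies in the image of
`Ψ_*`. Equality of classes is encoded as equality modulo coboundaries of `F^•`. -/
def integralCocycles : AddSubgroup (E k) :=
  (dE k).ker ⊓ ((dI k).ker.map (Ψ k) ⊔ Bc dF k).comap (j k)

/-- The inclusion `(a, r) ↦ (a, 0, r)` of mapping cone cocycles into sparks. -/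
def coneToSparks : Cone dF dI Ψ k →+ Sparks dF dI Ψ j k :=
  (((AddMonoidHom.fst _ _).prod ((AddMonoidHom.inr _ _).comp (AddMonoidHom.snd _ _))).comp
    (Cone dF dI Ψ k).subtype).codRestrict _ fun p => ⟨by simpa using p.2.2, p.2.1⟩

/-- The projection `(a, e, r) ↦ e` on sparks, which induces `δ₁` on spark classes. -/
def sparkForm : Sparks dF dI Ψ j k →+ E (k + 1) :=
  ((AddMonoidHom.fst _ _).comp (AddMonoidHom.snd _ _)).comp (Sparks dF dI Ψ j k).subtype

variable {dF dE dI Ψ j k}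

theorem mem_integralCocycles {e : E k} :
    e ∈ integralCocycles dF dE dI Ψ j k ↔
      dE k e = 0 ∧ ∃ u : Ic k, dI k u = 0 ∧ j k e - Ψ k u ∈ Bc dF k := by
  simp only [integralCocycles, mem_inf, AddMonoidHom.mem_ker, mem_comap, mem_sup, mem_map,
    exists_exists_and_eq_and]
  refine and_congr_right' (exists_congr fun u => and_congr_right' ?_)
  constructor
  · rintro ⟨b, hb, hub⟩
    rwa [← hub, add_sub_cancel_left]
  · exact fun h => ⟨_, h, add_sub_cancel _ _⟩

theorem ker_sparkForm : (sparkForm dF dI Ψ j k).ker = (coneToSparks dF dI Ψ j k).range := by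
  ext p
  constructor
  · obtain ⟨⟨a, e, r⟩, hda, hdr⟩ := p
    rintro (rfl : e = 0)
    exact ⟨⟨(a, r), hdr, by simpa using hda⟩, rfl⟩
  · rintro ⟨q, rfl⟩
    rfl

theorem coneRel_eq_comap_sparkRel :
    ConeRel dF dI Ψ k = (SparkRel dF dI Ψ j k).comap (coneToSparks dF dI Ψ j k) :=
  rfl

theorem sparkRel_le_ker_sparkForm (hdF : ∀ k x, dF (k + 1) (dF k x) = 0)
    (hΨ : ∀ k x, Ψ (k + 1) (dI k x) = dF k (Ψ k x)) (hjinj : ∀ k, Function.Injective (j k)) :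
    SparkRel dF dI Ψ j k ≤ (sparkForm dF dI Ψ j k).ker := by
  rintro ⟨⟨a, e, r⟩, hda : dF k a = j (k + 1) e - Ψ (k + 1) r, -⟩
    ⟨s, has : a - Ψ k s ∈ Bc dF k, hrs : r = -dI k s⟩
  have hda' : dF k a = dF k (Ψ k s) := sub_eq_zero.1 (by rw [← map_sub]; exact Bc_le_ker_s13 hdF k has)
  refine (map_eq_zero_iff _ (hjinj (k + 1))).1 ?_
  calc j (k + 1) e = dF k a + Ψ (k + 1) r := eq_add_of_sub_eq hda.symm
    _ = 0 := by rw [hda', hrs, map_neg, hΨ, add_neg_cancel]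

theorem dE_sparkForm (hdF : ∀ k x, dF (k + 1) (dF k x) = 0)
    (hΨ : ∀ k x, Ψ (k + 1) (dI k x) = dF k (Ψ k x)) (hj : ∀ k x, j (k + 1) (dE k x) = dF k (j k x))
    (hjinj : ∀ k, Function.Injective (j k)) (p : Sparks dF dI Ψ j k) :
    dE (k + 1) (sparkForm dF dI Ψ j k p) = 0 := by
  obtain ⟨⟨a, e, r⟩, hda : dF k a = j (k + 1) e - Ψ (k + 1) r, hdr : dI (k + 1) r = 0⟩ := p
  refine (map_eq_zero_iff _ (hjinj (k + 2))).1 ?_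
  calc j (k + 2) (dE (k + 1) e) = dF (k + 1) (dF k a + Ψ (k + 1) r) := by
        rw [hj, eq_add_of_sub_eq hda.symm]
    _ = 0 := by rw [map_add, hdF, ← hΨ, hdr, map_zero, add_zero]

theorem range_sparkForm (hdF : ∀ k x, dF (k + 1) (dF k x) = 0)
    (hΨ : ∀ k x, Ψ (k + 1) (dI k x) = dF k (Ψ k x)) (hj : ∀ k x, j (k + 1) (dE k x) = dF k (j k x))
    (hjinj : ∀ k, Function.Injective (j k)) :
    (sparkForm dF dI Ψ j k).range = integralCocycles dF dE dI Ψ j (k + 1) := by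
  ext e
  rw [mem_integralCocycles]
  constructor
  · rintro ⟨p, rfl⟩
    exact ⟨dE_sparkForm hdF hΨ hj hjinj p, p.1.2.2, p.2.2, p.1.1, p.2.1⟩
  · rintro ⟨-, u, hu, a, ha⟩
    exact ⟨⟨(a, e, u), ha, hu⟩, rfl⟩

end SparkSequence

theorem statement13_general
    (F E Ic : ℕ → Type*)
    [∀ i, AddCommGroup (F i)] [∀ i, AddCommGroup (E i)] [∀ i, AddCommGroup (Ic i)]
    (dF : ∀ k, F k →+ F (k + 1)) (hdF : ∀ k x, dF (k + 1) (dF k x) = 0)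
    (dE : ∀ k, E k →+ E (k + 1)) (dI : ∀ k, Ic k →+ Ic (k + 1))
    (Ψ : ∀ k, Ic k →+ F k) (hΨ : ∀ k x, Ψ (k + 1) (dI k x) = dF k (Ψ k x))
    (j : ∀ k, E k →+ F k) (hj : ∀ k x, j (k + 1) (dE k x) = dF k (j k x))
    (hjinj : ∀ k, Function.Injective (j k))
    (k : ℕ) :
    ∃ (ι : ConeH dF dI Ψ k →+ SparkH dF dI Ψ j k)
      (δ₁ : SparkH dF dI Ψ j k →+ E (k + 1)),
      (∀ p : ↥(Cone dF dI Ψ k),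
          ∃ hsp : (((p : F k × Ic (k + 1)).1, 0, (p : F k × Ic (k + 1)).2) :
              F k × E (k + 1) × Ic (k + 1)) ∈ Sparks dF dI Ψ j k,
            ι (coneMk dF dI Ψ k p) = sparkMk dF dI Ψ j k
              ⟨((p : F k × Ic (k + 1)).1, 0, (p : F k × Ic (k + 1)).2), hsp⟩) ∧
      Function.Injective ι ∧
      (∀ p : ↥(Sparks dF dI Ψ j k),
          δ₁ (sparkMk dF dI Ψ j k p) = (p : F k × E (k + 1) × Ic (k + 1)).2.1) ∧
      (∀ e : E (k + 1), (∃ x, δ₁ x = e) ↔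
          (dE (k + 1) e = 0 ∧ ∃ u : Ic (k + 1), dI (k + 1) u = 0 ∧
            j (k + 1) e - Ψ (k + 1) u ∈ Bc dF (k + 1))) ∧
      (∀ x, δ₁ x = 0 ↔ x ∈ ι.range) := by
  have hδ := sparkRel_le_ker_sparkForm (k := k) hdF hΨ hjinj
  have range_δ := (range_quotientLift hδ).trans (range_sparkForm hdF hΨ hj hjinj)
  have ker_δ := ker_quotientLift_eq_range_quotientMap
    coneRel_eq_comap_sparkRel.le hδ ker_sparkForm
  refine ⟨QuotientAddGroup.map _ _ (coneToSparks dF dI Ψ j k) coneRel_eq_comap_sparkRel.le,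
    QuotientAddGroup.lift _ (sparkForm dF dI Ψ j k) hδ,
    fun p => ⟨(coneToSparks dF dI Ψ j k p).2, rfl⟩,
    quotientMap_injective_of_eq_comap coneRel_eq_comap_sparkRel,
    fun _ => rfl,
    fun e => ?_,
    fun x => ?_⟩
  · rw [← mem_integralCocycles, ← range_δ, AddMonoidHom.mem_range]
  · rw [← ker_δ, AddMonoidHom.mem_ker]

/-- With `G` the mapping cone of `Ψ : I^• → F^•`, there is a short
exact sequence `0 → H^k(G) → Ĥ^k(𝒮) → Z^{k+1}_I(E^•) → 0`, where the first map sends the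
class of `(a, r)` to the spark class `[(a, 0, r)]` and the second map is
`δ₁([(a, e, r)]) = e`. -/
theorem statement13
    (F E Ic : ℕ → Type*)
    [∀ i, AddCommGroup (F i)] [∀ i, AddCommGroup (E i)] [∀ i, AddCommGroup (Ic i)]
    (dF : ∀ k, F k →+ F (k+1)) (hdF : ∀ k x, dF (k+1) (dF k x) = 0)
    (dE : ∀ k, E k →+ E (k+1)) (hdE : ∀ k x, dE (k+1) (dE k x) = 0)
    (dI : ∀ k, Ic k →+ Ic (k+1)) (hdI : ∀ k x, dI (k+1) (dI k x) = 0)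
    (Ψ : ∀ k, Ic k →+ F k) (hΨ : ∀ k x, Ψ (k+1) (dI k x) = dF k (Ψ k x))
    (j : ∀ k, E k →+ F k) (hj : ∀ k x, j (k+1) (dE k x) = dF k (j k x))
    (hjinj : ∀ k, Function.Injective (j k))
    (hiso_inj : ∀ (k : ℕ) (e : E k), dE k e = 0 → j k e ∈ Bc dF k → e ∈ Bc dE k)
    (hiso_surj : ∀ (k : ℕ) (a : F k), dF k a = 0 →
      ∃ e : E k, dE k e = 0 ∧ a - j k e ∈ Bc dF k)
    (k : ℕ) :
    ∃ (ι : ConeH dF dI Ψ k →+ SparkH dF dI Ψ j k)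
      (δ₁ : SparkH dF dI Ψ j k →+ E (k+1)),
      (∀ p : ↥(Cone dF dI Ψ k),
          ∃ hsp : (((p : F k × Ic (k+1)).1, 0, (p : F k × Ic (k+1)).2) :
              F k × E (k+1) × Ic (k+1)) ∈ Sparks dF dI Ψ j k,
            ι (coneMk dF dI Ψ k p) = sparkMk dF dI Ψ j k
              ⟨((p : F k × Ic (k+1)).1, 0, (p : F k × Ic (k+1)).2), hsp⟩) ∧
      Function.Injective ι ∧
      (∀ p : ↥(Sparks dF dI Ψ j k),
          δ₁ (sparkMk dF dI Ψ j k p) = (p : F k × E (k+1) × Ic (k+1)).2.1) ∧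
      (∀ e : E (k+1), (∃ x, δ₁ x = e) ↔
          (dE (k+1) e = 0 ∧ ∃ u : Ic (k+1), dI (k+1) u = 0 ∧
            j (k+1) e - Ψ (k+1) u ∈ Bc dF (k+1))) ∧
      (∀ x, δ₁ x = 0 ↔ x ∈ ι.range) :=
  statement13_general F E Ic dF hdF dE dI Ψ hΨ j hj hjinj k

end
end
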